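/- Let G be a DAG on [d], let (p_i), (q_i) be C¹ conditional-density families for G, and let σ be an automorphism of G. For each k ∈ [d] let the first model carry a stochastic intervention p̃_k on node k that is either perfect (pa^k(k) = ∅) or structure-preserving (pa^k(k) = pa(k)), and let the second model carry a matching intervention q̃_{σ(k)} on node σ(k) of the same kind, yielding interventional joint densities p^k and q^k (and unintervened p^0, q^0). Assume the general interventional discrepancy holds in both models for every k. Let f, f′ : ℝ^d → ℝ^d be C¹ diffeomorphisms with f_*P^k = f′_*Q^k for all k ∈ {0,…,d}, and set φ := f′⁻¹∘f. Then for every i ∈ [d] and every j ∉ anc̄(i), the partial derivative ∂φ_{σ(i)}/∂z_j vanishes identically on ℝ^d; equivalently, φ = P_σ ∘ h where P_σ is the permutation matrix of σ and each component h_i of the C¹ diffeomorphism h depends only on z_{anc̄(i)}. -/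

import Mathlib

open MeasureTheory

noncomputable section

/-- `f` depends only on the coordinates in `S`. -/
def DependsOnlyOn {d : ℕ} {α : Type*} (f : (Fin d → ℝ) → α) (S : Finset (Fin d)) : Prop :=
  ∀ z w : Fin d → ℝ, (∀ i ∈ S, z i = w i) → f z = f w

/-- `f` is a C¹ diffeomorphism between (real) normed spaces. -/
def IsC1Diffeo {E F : Type*} [NormedAddCommGroup E] [NormedSpace ℝ E]
    [NormedAddCommGroup F] [NormedSpace ℝ F] (f : E → F) : Prop :=
  ContDiff ℝ 1 f ∧ ∃ g : F → E, ContDiff ℝ 1 g ∧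
    Function.LeftInverse g f ∧ Function.RightInverse g f

/-- The measure on `ℝ^d` with density `ρ` with respect to Lebesgue measure. -/
def densityMeasure {d : ℕ} (ρ : (Fin d → ℝ) → ℝ) : Measure (Fin d → ℝ) :=
  volume.withDensity fun z => ENNReal.ofReal (ρ z)

/-- The measure on `ℝ` with density `r` with respect to Lebesgue measure. -/
def densityMeasure₁ (r : ℝ → ℝ) : Measure ℝ :=
  volume.withDensity fun x => ENNReal.ofReal (r x)

/-- Membership in `S_scaling`: the map acts by an elementwise C¹ diffeomorphism of `ℝ`
on each coordinate. -/
def InSScaling {d : ℕ} (h : (Fin d → ℝ) → (Fin d → ℝ)) : Prop :=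
  ∃ hs : Fin d → ℝ → ℝ, (∀ i, IsC1Diffeo (hs i)) ∧ ∀ (z : Fin d → ℝ) (i : Fin d), h z i = hs i (z i)

/-- Membership in `S_reparam`: a coordinate permutation composed with an element of
`S_scaling`. -/
def InSReparam {d : ℕ} (g : (Fin d → ℝ) → (Fin d → ℝ)) : Prop :=
  ∃ (σ : Equiv.Perm (Fin d)) (hs : Fin d → ℝ → ℝ),
    (∀ i, IsC1Diffeo (hs i)) ∧ ∀ (z : Fin d → ℝ) (i : Fin d), g z i = hs (σ i) (z (σ i))

/-- A C¹ conditional-density family for the DAG on `Fin d` with parent map `pa`: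
each `p i` is strictly positive, C¹, depends only on the coordinates `{i} ∪ pa i`,
and integrates to `1` in the `i`-th coordinate. -/
def IsCondFamily {d : ℕ} (pa : Fin d → Finset (Fin d))
    (p : Fin d → (Fin d → ℝ) → ℝ) : Prop :=
  ∀ i, (∀ z, 0 < p i z) ∧ ContDiff ℝ 1 (p i) ∧
    DependsOnlyOn (p i) (insert i (pa i)) ∧
    ∀ z, (∫ t : ℝ, p i (Function.update z i t)) = 1

/-- A strictly positive C¹ probability density on `ℝ`. -/
def IsC1Density (r : ℝ → ℝ) : Prop :=
  (∀ x, 0 < r x) ∧ ContDiff ℝ 1 r ∧ (∫ x : ℝ, r x) = 1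

/-- The joint density `z ↦ ∏ i, p i z` of a conditional-density family. -/
def jointDensity {d : ℕ} (p : Fin d → (Fin d → ℝ) → ℝ) : (Fin d → ℝ) → ℝ :=
  fun z => ∏ i, p i z

/-- `j` is an ancestor of `i` in the DAG with parent map `pa` (transitive closure of the
parent relation). -/
def IsAnc {d : ℕ} (pa : Fin d → Finset (Fin d)) (j i : Fin d) : Prop :=
  Relation.TransGen (fun a b => a ∈ pa b) j i

/-!
Intervening on one node changes one factor of the joint density, so dividing an interventional
density by the observational one leaves `p̃ₖ / pₖ`, and equality of the pushforwards becomes the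
pointwise identity `log (p̃ₖ / pₖ) = log (q̃ / q) ∘ φ`, with `q̃ / q` taken at the node `σ k`. The
left side does not see `z_j` when `j` is not in the ancestral closure of `k`. Differentiating the
right side along `z_j` by the chain rule, the terms at the parents of `σ k` vanish by induction
along the DAG; what remains is `∂φ_{σ k}/∂z_j` times the derivative of `log (q̃ / q)` in its own
variable, which is nonzero almost everywhere by the interventional discrepancy. Continuity of
`∂φ_{σ k}/∂z_j` removes the exceptional null set.
-/

namespace IsC1Diffeo

section Composition

variable {E F G : Type*} [NormedAddCommGroup E] [NormedSpace ℝ E] [NormedAddCommGroup F]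
  [NormedSpace ℝ F] [NormedAddCommGroup G] [NormedSpace ℝ G]

theorem comp {g : F → G} {f : E → F} (hg : IsC1Diffeo g) (hf : IsC1Diffeo f) :
    IsC1Diffeo (g ∘ f) := by
  obtain ⟨hg, g', hg', hgl, hgr⟩ := hg
  obtain ⟨hf, f', hf', hfl, hfr⟩ := hf
  exact ⟨hg.comp hf, f' ∘ g', hf'.comp hg', hgl.comp hfl, hgr.comp hfr⟩

theorem measurableEmbedding [MeasurableSpace E] [BorelSpace E] [MeasurableSpace F] [BorelSpace F]
    {f : E → F} (hf : IsC1Diffeo f) : MeasurableEmbedding f := by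
  obtain ⟨hf, g, hg, hl, hr⟩ := hf
  let e : E ≃ₜ F := ⟨⟨f, g, hl, hr⟩, hf.continuous, hg.continuous⟩
  exact e.measurableEmbedding

end Composition

theorem quasiMeasurePreserving {E : Type*} [NormedAddCommGroup E] [NormedSpace ℝ E]
    [FiniteDimensional ℝ E] [MeasurableSpace E] [BorelSpace E] {f : E → E} (hf : IsC1Diffeo f)
    (μ : Measure E) [μ.IsAddHaarMeasure] : Measure.QuasiMeasurePreserving f μ μ := by
  obtain ⟨hf, g, hg, hl, hr⟩ := hf
  refine ⟨hf.continuous.measurable, .mk fun N hN hN₀ => ?_⟩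
  rw [Measure.map_apply hf.continuous.measurable hN, ← Set.image_eq_preimage_of_inverse hr hl]
  exact addHaar_image_eq_zero_of_differentiableOn_of_addHaar_eq_zero μ
    (hg.differentiable one_ne_zero).differentiableOn hN₀

end IsC1Diffeo

section Densities

open scoped ENNReal

variable {X Y : Type*} [MeasurableSpace X] [MeasurableSpace Y]

theorem map_comp_eq_of_map_eq {Z : Type*} [MeasurableSpace Z] {μ : Measure X} {ν : Measure Y}
    {f : X → Z} {f' : Y → Z} {g' : Z → Y} (hf : Measurable f) (hf' : Measurable f')
    (hg' : Measurable g') (hleft : Function.LeftInverse g' f') (h : μ.map f = ν.map f') :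
    μ.map (g' ∘ f) = ν := by
  rw [← Measure.map_map hg' hf, h, Measure.map_map hg' hf', hleft.id, Measure.map_id]

theorem map_withDensity_comp (μ : Measure X) {φ : X → Y} (hφ : Measurable φ) {g : Y → ℝ≥0∞}
    (hg : Measurable g) : (μ.withDensity (g ∘ φ)).map φ = (μ.map φ).withDensity g := by
  ext s hs
  rw [Measure.map_apply hφ hs, withDensity_apply _ (hφ hs), withDensity_apply _ hs,
    setLIntegral_map hs hg hφ]
  rfl

/-- Cross-multiplied, so that no density has to be positive or finite. -/
theorem ae_mul_comp_eq_of_map_withDensity_eq {μ : Measure X} [SigmaFinite μ] {ν : Measure Y}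
    {φ : X → Y} (hφ : MeasurableEmbedding φ) {f₀ f₁ : X → ℝ≥0∞} {g₀ g₁ : Y → ℝ≥0∞}
    (hf₀ : Measurable f₀) (hf₁ : Measurable f₁) (hg₀ : Measurable g₀) (hg₁ : Measurable g₁)
    (h₀ : (μ.withDensity f₀).map φ = ν.withDensity g₀)
    (h₁ : (μ.withDensity f₁).map φ = ν.withDensity g₁) :
    f₁ * (g₀ ∘ φ) =ᵐ[μ] f₀ * (g₁ ∘ φ) := by
  have transport {f : X → ℝ≥0∞} {g h : Y → ℝ≥0∞} (hf : Measurable f) (hg : Measurable g)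
      (hh : Measurable h) (hfg : (μ.withDensity f).map φ = ν.withDensity g) :
      (μ.withDensity (f * (h ∘ φ))).map φ = ν.withDensity (g * h) := by
    rw [withDensity_mul _ hf (hh.comp hφ.measurable), map_withDensity_comp _ hφ.measurable hh,
      hfg, withDensity_mul _ hg hh]
  have hmap : (μ.withDensity (f₁ * (g₀ ∘ φ))).map φ = (μ.withDensity (f₀ * (g₁ ∘ φ))).map φ := by
    rw [transport hf₁ hg₁ hg₀ h₁, transport hf₀ hg₀ hg₁ h₀, mul_comm]
  rw [← withDensity_eq_iff_of_sigmaFinite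
    (hf₁.mul (hg₀.comp hφ.measurable)).aemeasurable (hf₀.mul (hg₁.comp hφ.measurable)).aemeasurable]
  simpa only [hφ.comap_map] using congrArg (Measure.comap φ) hmap

/-- The logarithm of the quotient `r / s` of two positive densities: the quantity that matching
interventions transport from one model to the other. -/
def logRatio {Ω : Type*} (r s : Ω → ℝ) : Ω → ℝ :=
  fun z => Real.log (r z) - Real.log (s z)

variable [TopologicalSpace X] [OpensMeasurableSpace X] [TopologicalSpace Y]
  [OpensMeasurableSpace Y] {μ : Measure X} [SigmaFinite μ] [μ.IsOpenPosMeasure] {ν : Measure Y}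
  {φ : X → Y}

theorem mul_comp_eq_of_map_withDensity_eq (hφ : MeasurableEmbedding φ) (hφc : Continuous φ)
    {f₀ f₁ : X → ℝ} {g₀ g₁ : Y → ℝ} (hf₀ : Continuous f₀) (hf₁ : Continuous f₁)
    (hg₀ : Continuous g₀) (hg₁ : Continuous g₁) (hf₀' : 0 ≤ f₀) (hf₁' : 0 ≤ f₁)
    (hg₀' : 0 ≤ g₀) (hg₁' : 0 ≤ g₁)
    (h₀ : (μ.withDensity fun x => .ofReal (f₀ x)).map φ = ν.withDensity fun y => .ofReal (g₀ y))
    (h₁ : (μ.withDensity fun x => .ofReal (f₁ x)).map φ = ν.withDensity fun y => .ofReal (g₁ y)) :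
    f₁ * (g₀ ∘ φ) = f₀ * (g₁ ∘ φ) := by
  refine (Continuous.ae_eq_iff_eq μ (hf₁.mul (hg₀.comp hφc)) (hf₀.mul (hg₁.comp hφc))).1 ?_
  filter_upwards [ae_mul_comp_eq_of_map_withDensity_eq hφ hf₀.measurable.ennreal_ofReal
    hf₁.measurable.ennreal_ofReal hg₀.measurable.ennreal_ofReal hg₁.measurable.ennreal_ofReal
    h₀ h₁] with x hx
  simp only [Pi.mul_apply, Function.comp_apply, ← ENNReal.ofReal_mul (hf₁' x),
    ← ENNReal.ofReal_mul (hf₀' x)] at hx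
  exact (ENNReal.ofReal_eq_ofReal_iff (mul_nonneg (hf₁' x) (hg₀' _))
    (mul_nonneg (hf₀' x) (hg₁' _))).1 hx

theorem logRatio_eq_logRatio_comp_of_map_withDensity_eq (hφ : MeasurableEmbedding φ)
    (hφc : Continuous φ) {a p₀ p₁ : X → ℝ} {b q₀ q₁ : Y → ℝ}
    (ha : Continuous a) (hp₀ : Continuous p₀) (hp₁ : Continuous p₁)
    (hb : Continuous b) (hq₀ : Continuous q₀) (hq₁ : Continuous q₁)
    (ha' : ∀ x, 0 < a x) (hp₀' : ∀ x, 0 < p₀ x) (hp₁' : ∀ x, 0 < p₁ x)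
    (hb' : ∀ y, 0 < b y) (hq₀' : ∀ y, 0 < q₀ y) (hq₁' : ∀ y, 0 < q₁ y)
    (h₀ : (μ.withDensity fun x => .ofReal (p₀ x * a x)).map φ =
      ν.withDensity fun y => .ofReal (q₀ y * b y))
    (h₁ : (μ.withDensity fun x => .ofReal (p₁ x * a x)).map φ =
      ν.withDensity fun y => .ofReal (q₁ y * b y)) :
    logRatio p₁ p₀ = logRatio q₁ q₀ ∘ φ := by
  have hcross := mul_comp_eq_of_map_withDensity_eq hφ hφc (hp₀.mul ha) (hp₁.mul ha) (hq₀.mul hb)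
    (hq₁.mul hb) (fun x => (mul_pos (hp₀' x) (ha' x)).le) (fun x => (mul_pos (hp₁' x) (ha' x)).le)
    (fun y => (mul_pos (hq₀' y) (hb' y)).le) (fun y => (mul_pos (hq₁' y) (hb' y)).le) h₀ h₁
  funext x
  have hcancel : p₁ x * q₀ (φ x) = p₀ x * q₁ (φ x) := by
    have hx := congrFun hcross x
    simp only [Pi.mul_apply, Function.comp_apply] at hx
    exact mul_right_cancel₀ (mul_pos (ha' x) (hb' (φ x))).ne' (by linarith)
  have hlog := congrArg Real.log hcancel
  rw [Real.log_mul (hp₁' x).ne' (hq₀' _).ne', Real.log_mul (hp₀' x).ne' (hq₁' _).ne'] at hlog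
  simp only [logRatio, Function.comp_apply]
  linarith

end Densities

section PartialDerivatives

variable {ι κ : Type*}

theorem fderiv_apply_eq_zero_of_dependsOn [Finite ι] {F : Type*} [NormedAddCommGroup F]
    [NormedSpace ℝ F] {S : (ι → ℝ) → F} {T : Set ι} (hS : DependsOn S T) (z : ι → ℝ) {v : ι → ℝ}
    (hv : ∀ l ∈ T, v l = 0) : fderiv ℝ S z v = 0 := by
  have := Fintype.ofFinite ι
  by_cases hd : DifferentiableAt ℝ S z
  · have hconst : (fun t : ℝ => S (z + t • v)) = fun _ => S z :=
      funext fun t => hS fun l hl => by simp [hv l hl]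
    rw [← hd.lineDeriv_eq_fderiv, lineDeriv, hconst, deriv_const]
  · simp [fderiv_zero_of_not_differentiableAt hd]

theorem fderiv_apply_eq_smul_of_dependsOn_insert [Finite ι] [DecidableEq ι] {F : Type*}
    [NormedAddCommGroup F] [NormedSpace ℝ F] {S : (ι → ℝ) → F} {m : ι} {T : Set ι}
    (hS : DependsOn S (insert m T)) (z : ι → ℝ) {v : ι → ℝ} (hv : ∀ l ∈ T, v l = 0) :
    fderiv ℝ S z v = v m • fderiv ℝ S z (Pi.single m 1) := by
  have hrest : fderiv ℝ S z (v - v m • Pi.single m 1) = 0 := by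
    refine fderiv_apply_eq_zero_of_dependsOn hS z fun l hl => ?_
    obtain rfl | hne := eq_or_ne l m
    · simp
    · simp [hne, hv l (Set.mem_of_mem_insert_of_ne hl hne)]
  rwa [map_sub, map_smul, sub_eq_zero] at hrest

theorem fderiv_apply_coord_eq_zero_of_comp [Fintype κ] [DecidableEq κ] {E : Type*}
    [NormedAddCommGroup E] [NormedSpace ℝ E] [MeasurableSpace E] {μ : Measure E}
    [μ.IsOpenPosMeasure] {φ : E → κ → ℝ} (hφ : ContDiff ℝ 1 φ) {S : (κ → ℝ) → ℝ}
    (hS : Differentiable ℝ S) {m : κ} {T : Set κ} (hST : DependsOn S (insert m T)) {v : E}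
    (hcomp : ∀ z, fderiv ℝ (S ∘ φ) z v = 0) (hT : ∀ l ∈ T, ∀ z, fderiv ℝ φ z v l = 0)
    (hne : ∀ᵐ z ∂μ, fderiv ℝ S (φ z) (Pi.single m 1) ≠ 0) (z : E) : fderiv ℝ φ z v m = 0 := by
  have hprod z : fderiv ℝ φ z v m * fderiv ℝ S (φ z) (Pi.single m 1) = 0 := by
    rw [← smul_eq_mul, ← fderiv_apply_eq_smul_of_dependsOn_insert hST (φ z) fun l hl => hT l hl z,
      ← hcomp z, fderiv_comp z (hS _) (hφ.differentiable one_ne_zero z)]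
    rfl
  have hcont : Continuous fun z => fderiv ℝ φ z v m :=
    (continuous_apply m).comp ((hφ.continuous_fderiv one_ne_zero).clm_apply continuous_const)
  have hae : (fun z => fderiv ℝ φ z v m) =ᵐ[μ] fun _ => 0 :=
    hne.mono fun z hz => (mul_eq_zero.1 (hprod z)).resolve_right hz
  exact congrFun ((Continuous.ae_eq_iff_eq μ hcont continuous_const).1 hae) z

theorem fderiv_single_apply_eq_zero_of_not_ancestor [Fintype ι] [DecidableEq ι] [Fintype κ]
    [DecidableEq κ] {pa : ι → Set ι} (hpa : WellFounded fun a b => a ∈ pa b) {σ : ι → κ}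
    {φ : (ι → ℝ) → κ → ℝ} (hφ : ContDiff ℝ 1 φ) {S : ι → (κ → ℝ) → ℝ}
    (hS : ∀ k, Differentiable ℝ (S k)) (hSdep : ∀ k, DependsOn (S k) (insert (σ k) (σ '' pa k)))
    (hSφdep : ∀ k, DependsOn (S k ∘ φ) (insert k (pa k)))
    (hne : ∀ k, ∀ᵐ z, fderiv ℝ (S k) (φ z) (Pi.single (σ k) 1) ≠ 0) (i : ι) {j : ι}
    (hj : ¬Relation.ReflTransGen (fun a b => a ∈ pa b) j i) (z : ι → ℝ) :
    fderiv ℝ φ z (Pi.single j 1) (σ i) = 0 := by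
  induction i using hpa.induction generalizing z with
  | _ k ih =>
    refine fderiv_apply_coord_eq_zero_of_comp hφ (hS k) (hSdep k) (fun w => ?_) ?_ (hne k) z
    · refine fderiv_apply_eq_zero_of_dependsOn (hSφdep k) w fun l hl => ?_
      refine Pi.single_eq_of_ne (fun hlj => hj ?_) 1
      subst hlj
      exact hl.elim (fun h => h ▸ .refl) fun h => .single h
    · rintro _ ⟨a, ha, rfl⟩ w
      exact ih a ha (fun h => hj (h.tail ha)) w

end PartialDerivatives

/-- An unnormalised mechanism of the node `k` with parents in `T`: a strictly positive C¹ function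
of `z_k` and `z_T`. Both the conditional densities of a model and the stochastic interventions on a
node are of this kind. -/
structure IsMechanism {ι : Type*} [Fintype ι] (k : ι) (T : Set ι) (r : (ι → ℝ) → ℝ) : Prop where
  pos : ∀ z, 0 < r z
  contDiff : ContDiff ℝ 1 r
  dependsOn : DependsOn r (insert k T)

namespace IsMechanism

variable {ι : Type*} [Fintype ι] {k : ι} {T : Set ι} {r s : (ι → ℝ) → ℝ}

theorem differentiable_log (hr : IsMechanism k T r) : Differentiable ℝ fun z => Real.log (r z) :=
  (hr.contDiff.differentiable one_ne_zero).log fun z => (hr.pos z).ne'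

theorem differentiable_logRatio (hr : IsMechanism k T r) (hs : IsMechanism k T s) :
    Differentiable ℝ (logRatio r s) :=
  hr.differentiable_log.sub hs.differentiable_log

theorem dependsOn_logRatio (hr : IsMechanism k T r) (hs : IsMechanism k T s) :
    DependsOn (logRatio r s) (insert k T) :=
  fun _ _ h => congrArg₂ (Real.log · - Real.log ·) (hr.dependsOn h) (hs.dependsOn h)

theorem fderiv_logRatio_apply (hr : IsMechanism k T r) (hs : IsMechanism k T s) (z v : ι → ℝ) :
    fderiv ℝ (logRatio r s) z v =
      fderiv ℝ (fun w => Real.log (r w)) z v - fderiv ℝ (fun w => Real.log (s w)) z v := by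
  rw [← sub_apply]
  exact congrArg (· v) (fderiv_fun_sub (hr.differentiable_log z) (hs.differentiable_log z))

theorem of_dependsOnlyOn {d : ℕ} {k : Fin d} {S : Finset (Fin d)} {T : Set (Fin d)}
    {r : (Fin d → ℝ) → ℝ} (hpos : ∀ z, 0 < r z) (hr : ContDiff ℝ 1 r)
    (hdep : DependsOnlyOn r (insert k S)) (hST : (S : Set (Fin d)) ⊆ T) : IsMechanism k T r where
  pos := hpos
  contDiff := hr
  dependsOn z w h := hdep z w fun i hi => h i <| (Finset.mem_insert.1 hi).imp_right (hST ·)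

end IsMechanism

theorem IsCondFamily.isMechanism {d : ℕ} {pa : Fin d → Finset (Fin d)}
    {p : Fin d → (Fin d → ℝ) → ℝ} (hp : IsCondFamily pa p) (i : Fin d) :
    IsMechanism i (pa i) (p i) :=
  .of_dependsOnlyOn (hp i).1 (hp i).2.1 (hp i).2.2.1 subset_rfl

theorem logRatio_eq_logRatio_comp_of_map_intervention_eq {ι κ : Type*} [Fintype ι] [Fintype κ]
    [DecidableEq ι] [DecidableEq κ] {pa : ι → Set ι} {pa' : κ → Set κ}
    {p : ι → (ι → ℝ) → ℝ} {q : κ → (κ → ℝ) → ℝ}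
    (hp : ∀ i, IsMechanism i (pa i) (p i)) (hq : ∀ i, IsMechanism i (pa' i) (q i))
    {k : ι} {l : κ} {r : (ι → ℝ) → ℝ} {s : (κ → ℝ) → ℝ}
    (hr : IsMechanism k (pa k) r) (hs : IsMechanism l (pa' l) s)
    {φ : (ι → ℝ) → κ → ℝ} (hφ : IsC1Diffeo φ)
    (hobs : (volume.withDensity fun z => .ofReal (∏ i, p i z)).map φ =
      volume.withDensity fun z => .ofReal (∏ i, q i z))
    (hint : (volume.withDensity fun z => .ofReal (r z * ∏ i ∈ {k}ᶜ, p i z)).map φ =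
      volume.withDensity fun z => .ofReal (s z * ∏ i ∈ {l}ᶜ, q i z)) :
    logRatio r (p k) = logRatio s (q l) ∘ φ := by
  simp only [fun z => Fintype.prod_eq_mul_prod_compl k (p · z),
    fun z => Fintype.prod_eq_mul_prod_compl l (q · z)] at hobs
  exact logRatio_eq_logRatio_comp_of_map_withDensity_eq hφ.measurableEmbedding hφ.1.continuous
    (continuous_finsetProd _ fun i _ => (hp i).contDiff.continuous)
    (hp k).contDiff.continuous hr.contDiff.continuous
    (continuous_finsetProd _ fun i _ => (hq i).contDiff.continuous)
    (hq l).contDiff.continuous hs.contDiff.continuous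
    (fun z => Finset.prod_pos fun i _ => (hp i).pos z) (hp k).pos hr.pos
    (fun z => Finset.prod_pos fun i _ => (hq i).pos z) (hq l).pos hs.pos hobs hint

theorem cauca_automorphism_ancestral_identifiability_general {ι X : Type*} [Fintype ι]
    [DecidableEq ι] [NormedAddCommGroup X] [NormedSpace ℝ X] [MeasurableSpace X] [BorelSpace X]
    {pa pa' : ι → Set ι} (hpa : WellFounded fun a b => a ∈ pa b)
    {σ : Equiv.Perm ι} (hσ : ∀ i j, σ j ∈ pa' (σ i) → j ∈ pa i) {p q pt qt : ι → (ι → ℝ) → ℝ}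
    (hp : ∀ i, IsMechanism i (pa i) (p i)) (hq : ∀ i, IsMechanism i (pa' i) (q i))
    (hpt : ∀ k, IsMechanism k (pa k) (pt k)) (hqt : ∀ k, IsMechanism (σ k) (pa' (σ k)) (qt k))
    (hdisc : ∀ k, ∀ᵐ z : ι → ℝ,
      fderiv ℝ (fun w => Real.log (q (σ k) w)) z (Pi.single (σ k) 1) ≠
        fderiv ℝ (fun w => Real.log (qt k w)) z (Pi.single (σ k) 1))
    {f f' : (ι → ℝ) → X} {g' : X → ι → ℝ} (hf : IsC1Diffeo f)
    (hf' : ContDiff ℝ 1 f') (hg' : ContDiff ℝ 1 g')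
    (hleft : Function.LeftInverse g' f') (hright : Function.RightInverse g' f')
    (hobs : (volume.withDensity fun z => .ofReal (∏ i, p i z)).map f =
      (volume.withDensity fun z => .ofReal (∏ i, q i z)).map f')
    (hint : ∀ k, (volume.withDensity fun z => .ofReal (pt k z * ∏ i ∈ {k}ᶜ, p i z)).map f =
      (volume.withDensity fun z => .ofReal (qt k z * ∏ i ∈ {σ k}ᶜ, q i z)).map f')
    (i : ι) {j : ι} (hj : ¬Relation.ReflTransGen (fun a b => a ∈ pa b) j i) (z : ι → ℝ) :
    fderiv ℝ (fun w => g' (f w) (σ i)) z (Pi.single j 1) = 0 := by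
  have hφ : IsC1Diffeo (g' ∘ f) := .comp ⟨hg', f', hf', hright, hleft⟩ hf
  have push {μ ν : Measure (ι → ℝ)} (h : μ.map f = ν.map f') : μ.map (g' ∘ f) = ν :=
    map_comp_eq_of_map_eq hf.1.continuous.measurable hf'.continuous.measurable
      hg'.continuous.measurable hleft h
  have hratio k : logRatio (pt k) (p k) = logRatio (qt k) (q (σ k)) ∘ g' ∘ f :=
    logRatio_eq_logRatio_comp_of_map_intervention_eq hp hq (hpt k) (hqt k) hφ (push hobs)
      (push (hint k))
  have himage k : pa' (σ k) ⊆ σ '' pa k := fun l hl =>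
    ⟨σ.symm l, hσ k _ (by rwa [σ.apply_symm_apply]), σ.apply_symm_apply l⟩
  have hne k : ∀ᵐ z,
      fderiv ℝ (logRatio (qt k) (q (σ k))) ((g' ∘ f) z) (Pi.single (σ k) 1) ≠ 0 := by
    filter_upwards [(hφ.quasiMeasurePreserving volume).ae (hdisc k)] with z hz
    rw [(hqt k).fderiv_logRatio_apply (hq (σ k))]
    exact sub_ne_zero.2 hz.symm
  have hzero := fderiv_single_apply_eq_zero_of_not_ancestor hpa hφ.1
    (fun k => (hqt k).differentiable_logRatio (hq (σ k)))
    (fun k => ((hqt k).dependsOn_logRatio (hq (σ k))).mono (Set.insert_subset_insert (himage k)))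
    (fun k => hratio k ▸ (hpt k).dependsOn_logRatio (hp k)) hne i hj z
  change fderiv ℝ (fun w => (g' ∘ f) w (σ i)) z _ = 0
  rw [fderiv_apply (hφ.1.differentiable one_ne_zero z)]
  exact hzero

/-- **Theorem (known targets up to graph automorphisms, part (i)).** Two models over the same
DAG, where `σ` is a graph automorphism; for each node `k` the first model carries a
stochastic intervention on node `k` that is either perfect (`pak k = ∅`) or
structure-preserving (`pak k = pa k`), and the second model carries a matching intervention
of the same kind on node `σ k` (whose post-intervention parent set is the `σ`-image of the
first model's). Under the general interventional discrepancy in both models and matching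
pushforwards in all regimes, `φ := f′⁻¹ ∘ f` satisfies `∂φ (σ i) / ∂z j ≡ 0` for every
`j ∉ anc̄(i)`; i.e. `φ = P_σ ∘ h` with each component `h i` depending only on the ancestral
closure of `i`. -/
theorem cauca_automorphism_ancestral_identifiability {d : ℕ}
    (pa : Fin d → Finset (Fin d))
    (hpa : ∀ i : Fin d, ∀ j ∈ pa i, j < i)
    (σ : Equiv.Perm (Fin d))
    (hσ : ∀ i j : Fin d, j ∈ pa i ↔ σ j ∈ pa (σ i))
    (p q : Fin d → (Fin d → ℝ) → ℝ)
    (hp : IsCondFamily pa p) (hq : IsCondFamily pa q)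
    (pak : Fin d → Finset (Fin d))
    (hkind : ∀ k : Fin d, pak k = ∅ ∨ pak k = pa k)
    (pt qt : Fin d → (Fin d → ℝ) → ℝ)
    (hpt : ∀ k : Fin d, (∀ z, 0 < pt k z) ∧ ContDiff ℝ 1 (pt k) ∧
        DependsOnlyOn (pt k) (insert k (pak k)) ∧
        ∀ z, (∫ t : ℝ, pt k (Function.update z k t)) = 1)
    (hqt : ∀ k : Fin d, (∀ z, 0 < qt k z) ∧ ContDiff ℝ 1 (qt k) ∧
        DependsOnlyOn (qt k) (insert (σ k) ((pak k).image σ)) ∧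
        ∀ z, (∫ t : ℝ, qt k (Function.update z (σ k) t)) = 1)
    (hdiscp : ∀ k i : Fin d, ∀ᵐ (z : Fin d → ℝ) ∂volume,
        fderiv ℝ (fun w => Real.log (p i w)) z (Pi.single i 1) ≠
          fderiv ℝ (fun w => Real.log (pt k w)) z (Pi.single k 1))
    (hdiscq : ∀ k i : Fin d, ∀ᵐ (z : Fin d → ℝ) ∂volume,
        fderiv ℝ (fun w => Real.log (q i w)) z (Pi.single i 1) ≠
          fderiv ℝ (fun w => Real.log (qt k w)) z (Pi.single (σ k) 1))
    (f f' g' : (Fin d → ℝ) → (Fin d → ℝ))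
    (hf : IsC1Diffeo f) (hf' : ContDiff ℝ 1 f') (hg' : ContDiff ℝ 1 g')
    (hinv₁ : Function.LeftInverse g' f') (hinv₂ : Function.RightInverse g' f')
    (hmatch0 : Measure.map f (densityMeasure (jointDensity p)) =
        Measure.map f' (densityMeasure (jointDensity q)))
    (hmatch : ∀ k : Fin d,
        Measure.map f (densityMeasure fun z =>
            pt k z * ∏ i ∈ ({k} : Finset (Fin d))ᶜ, p i z) =
        Measure.map f' (densityMeasure fun z =>
            qt k z * ∏ i ∈ ({σ k} : Finset (Fin d))ᶜ, q i z)) :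
    ∀ i j : Fin d, ¬(IsAnc pa j i ∨ j = i) →
      ∀ z : Fin d → ℝ, fderiv ℝ (fun w => g' (f w) (σ i)) z (Pi.single j 1) = 0 := by
  intro i j hj
  have hpak : ∀ k, pak k ⊆ pa k := fun k =>
    (hkind k).elim (fun h => h ▸ Finset.empty_subset _) Eq.subset
  have hpt' : ∀ k, IsMechanism k (pa k) (pt k) := fun k =>
    .of_dependsOnlyOn (hpt k).1 (hpt k).2.1 (hpt k).2.2.1 (hpak k)
  have hqt' : ∀ k, IsMechanism (σ k) (pa (σ k)) (qt k) := fun k =>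
    .of_dependsOnlyOn (hqt k).1 (hqt k).2.1 (hqt k).2.2.1 <|
      Finset.image_subset_iff.2 fun a ha => (hσ k a).1 (hpak k ha)
  exact cauca_automorphism_ancestral_identifiability_general
    (pa := fun i => pa i) (Subrelation.wf (hpa _ _ ·) wellFounded_lt) (fun k l => (hσ k l).2)
    hp.isMechanism hq.isMechanism hpt' hqt' (fun k => hdiscq k (σ k)) hf hf' hg' hinv₁ hinv₂
    hmatch0 hmatch i fun h =>
      hj ((Relation.reflTransGen_iff_eq_or_transGen.1 h).symm.imp_right Eq.symm)
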